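/- Let V be a finite set, G a finite simple graph on V with edge set E, and Φ : V → ℝ. Define F : ℝ → ℝ by F(x) = ∫_{−∞}^x arctan(eᵘ) du, and define S : (V → ℝ) → ℝ by S(ρ) = Σ_{{j,k}∈E} [F(ρ_k − ρ_j) + F(ρ_j − ρ_k) − F(ρ_j + ρ_k) − F(−ρ_j − ρ_k) − π(ρ_j + ρ_k)] + Σ_{j∈V} Φ(j) ρ_j. Then for every ρ : V → ℝ and every direction w : V → ℝ, the function t ↦ S(ρ + t·w) is twice differentiable and its second derivative at t = 0 equals Σ_{{j,k}∈E} [ (w_k − w_j)²/cosh(ρ_k − ρ_j) − (w_k + w_j)²/cosh(ρ_k + ρ_j) ]. -/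

import Mathlib

/-!
By the fundamental theorem of calculus, `F' x = arctan (exp x)`: the integrand is dominated by
`exp` near `-∞`, so the improper integral converges (`integrableOn_arctan_exp`,
`hasDerivAt_Fint`). Differentiating once more, `F'' x = exp x / (1 + exp x ^ 2) = 1 / (2 cosh x)`
(`hasDerivAt_arctan_exp`). Along a line `t ↦ ρ + t • w`, each edge term is a combination of `F` at
affine functions of `t` plus an affine function, so the chain rule gives its second derivative;
as `cosh` is even, the two terms at `±(ρ k - ρ j)` together contribute
`(w k - w j) ^ 2 / cosh (ρ k - ρ j)`, and likewise for the sum (`edge_deriv`). The claim follows by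
summing over the edges, the `Φ` part being affine in `t`.
-/

open MeasureTheory

/-- `F(x) = ∫_{−∞}^x arctan(eᵘ) du` (equal to `Im Li₂(i eˣ)`). -/
noncomputable def Fint (x : ℝ) : ℝ := ∫ u in Set.Iio x, Real.arctan (Real.exp u)

/-- The variational functional `S` for orthogonal circle patterns in the sphere. -/
noncomputable def circlePatternFunctional {V : Type*} [Fintype V] [DecidableEq V]
    (G : SimpleGraph V) [DecidableRel G.Adj] (Φ : V → ℝ) (ρ : V → ℝ) : ℝ :=
  (∑ e ∈ G.edgeFinset,
    Sym2.lift ⟨fun j k =>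
      Fint (ρ k - ρ j) + Fint (ρ j - ρ k) - Fint (ρ j + ρ k) - Fint (-ρ j - ρ k)
        - Real.pi * (ρ j + ρ k),
      fun j k => by ring_nf⟩ e)
  + ∑ j, Φ j * ρ j

lemma arctan_exp_le_exp (u : ℝ) : Real.arctan (Real.exp u) ≤ Real.exp u := by
  have h := Real.le_tan (Real.arctan_nonneg.2 (Real.exp_pos u).le) (Real.arctan_lt_pi_div_two _)
  rwa [Real.tan_arctan] at h

lemma continuous_arctan_exp : Continuous fun u : ℝ => Real.arctan (Real.exp u) :=
  Real.continuous_arctan.comp Real.continuous_exp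

lemma integrableOn_arctan_exp (c : ℝ) :
    IntegrableOn (fun u => Real.arctan (Real.exp u)) (Set.Iic c) := by
  refine Integrable.mono' (integrableOn_exp_Iic c)
    continuous_arctan_exp.aestronglyMeasurable (Filter.Eventually.of_forall fun u => ?_)
  rw [Real.norm_of_nonneg (Real.arctan_nonneg.2 (Real.exp_pos u).le)]
  exact arctan_exp_le_exp u

lemma hasDerivAt_Fint (x : ℝ) : HasDerivAt Fint (Real.arctan (Real.exp x)) x := by
  have hF : Fint = fun y => Fint 0 + ∫ u in (0 : ℝ)..y, Real.arctan (Real.exp u) := by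
    funext y
    rw [← intervalIntegral.integral_Iic_sub_Iic (integrableOn_arctan_exp 0)
      (integrableOn_arctan_exp y)]
    simp only [Fint, integral_Iic_eq_integral_Iio]
    ring
  rw [hF]
  exact (continuous_arctan_exp.integral_hasStrictDerivAt 0 x).hasDerivAt.const_add _

lemma hasDerivAt_arctan_exp (x : ℝ) :
    HasDerivAt (fun u => Real.arctan (Real.exp u)) (1 / (2 * Real.cosh x)) x := by
  refine (Real.hasDerivAt_exp x).arctan.congr_deriv ?_
  rw [Real.cosh_eq, Real.exp_neg]
  have := Real.exp_pos x
  field_simp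
  ring

/-- Along an affine function `t ↦ a + t * b`, `F` has first derivative `b * arctan (exp (a + t * b))`
and second derivative `b ^ 2 / (2 * cosh (a + t * b))`. -/
lemma Fint_line (a b t : ℝ) :
    HasDerivAt (fun t => Fint (a + t * b)) (b * Real.arctan (Real.exp (a + t * b))) t ∧
    HasDerivAt (fun t => b * Real.arctan (Real.exp (a + t * b)))
      (b ^ 2 / (2 * Real.cosh (a + t * b))) t := by
  have hl : HasDerivAt (fun t : ℝ => a + t * b) b t := by
    simpa using ((hasDerivAt_id t).mul_const b).const_add a
  constructor
  · have h := (hasDerivAt_Fint (a + t * b)).comp t hl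
    exact h.congr_deriv (mul_comm _ _)
  · have h := ((hasDerivAt_arctan_exp (a + t * b)).comp t hl).const_mul b
    exact h.congr_deriv (by ring)

/-- The edge contribution to `S`, restricted to the line `t ↦ ρ + t • w`, has an everywhere defined
derivative `g`, and `g` is differentiable with the expected value of `g'` at `0`. -/
lemma edge_deriv {V : Type*} (ρ w : V → ℝ) (j k : V) :
    ∃ g : ℝ → ℝ,
      (∀ t, HasDerivAt (fun t : ℝ =>
        Fint ((ρ + t • w) k - (ρ + t • w) j) + Fint ((ρ + t • w) j - (ρ + t • w) k)
          - Fint ((ρ + t • w) j + (ρ + t • w) k) - Fint (-(ρ + t • w) j - (ρ + t • w) k)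
          - Real.pi * ((ρ + t • w) j + (ρ + t • w) k)) (g t) t) ∧
      Differentiable ℝ g ∧
      HasDerivAt g ((w k - w j) ^ 2 / Real.cosh (ρ k - ρ j)
        - (w k + w j) ^ 2 / Real.cosh (ρ k + ρ j)) 0 := by
  have h1 := Fint_line (ρ k - ρ j) (w k - w j)
  have h2 := Fint_line (ρ j - ρ k) (w j - w k)
  have h3 := Fint_line (ρ j + ρ k) (w j + w k)
  have h4 := Fint_line (-ρ j - ρ k) (-w j - w k)
  have hl (t : ℝ) : HasDerivAt (fun t : ℝ => Real.pi * ((ρ j + ρ k) + t * (w j + w k)))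
      (Real.pi * (w j + w k)) t := by
    simpa using (((hasDerivAt_id t).mul_const (w j + w k)).const_add (ρ j + ρ k)).const_mul Real.pi
  have hg (t : ℝ) := ((((h1 t).2.add (h2 t).2).sub (h3 t).2).sub (h4 t).2).sub_const
    (Real.pi * (w j + w k))
  refine ⟨_, fun t => ?_, fun t => (hg t).differentiableAt, ?_⟩
  · refine (((((h1 t).1.add (h2 t).1).sub (h3 t).1).sub (h4 t).1).sub
      (hl t)).congr_of_eventuallyEq (Filter.Eventually.of_forall fun s => ?_)
    simp only [Pi.add_apply, Pi.sub_apply, Pi.smul_apply, smul_eq_mul]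
    ring_nf
  · refine (hg 0).congr_deriv ?_
    have e2 : Real.cosh (ρ j - ρ k) = Real.cosh (ρ k - ρ j) := by
      rw [← Real.cosh_neg]; ring_nf
    have e4 : Real.cosh (-ρ j - ρ k) = Real.cosh (ρ k + ρ j) := by
      rw [← Real.cosh_neg]; ring_nf
    simp only [zero_mul, add_zero, e2, e4, add_comm (ρ j) (ρ k)]
    have := (Real.cosh_pos (ρ k - ρ j)).ne'
    have := (Real.cosh_pos (ρ k + ρ j)).ne'
    field_simp
    ring

/-- **The Hessian of the spherical circle pattern functional.**
For every `ρ` and every direction `w`, the function `t ↦ S(ρ + t w)` is twice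
differentiable, and its second derivative at `t = 0` equals
`∑_{{j,k} ∈ E} [(w_k − w_j)²/cosh(ρ_k − ρ_j) − (w_k + w_j)²/cosh(ρ_k + ρ_j)]`. -/
theorem circlePatternFunctional_second_deriv
    {V : Type*} [Fintype V] [DecidableEq V]
    (G : SimpleGraph V) [DecidableRel G.Adj] (Φ : V → ℝ)
    (ρ w : V → ℝ) :
    Differentiable ℝ (fun t : ℝ => circlePatternFunctional G Φ (ρ + t • w)) ∧
    Differentiable ℝ (deriv (fun t : ℝ => circlePatternFunctional G Φ (ρ + t • w))) ∧
    deriv (deriv (fun t : ℝ => circlePatternFunctional G Φ (ρ + t • w))) 0 =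
      ∑ e ∈ G.edgeFinset,
        Sym2.lift ⟨fun j k =>
          (w k - w j) ^ 2 / Real.cosh (ρ k - ρ j) - (w k + w j) ^ 2 / Real.cosh (ρ k + ρ j),
          fun j k => by simp only [Real.cosh_sub]; ring_nf⟩ e := by
  have key (e : Sym2 V) : ∃ g : ℝ → ℝ,
      (∀ t, HasDerivAt (fun t : ℝ => Sym2.lift ⟨fun j k =>
        Fint ((ρ + t • w) k - (ρ + t • w) j) + Fint ((ρ + t • w) j - (ρ + t • w) k)
          - Fint ((ρ + t • w) j + (ρ + t • w) k) - Fint (-(ρ + t • w) j - (ρ + t • w) k)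
          - Real.pi * ((ρ + t • w) j + (ρ + t • w) k), fun j k => by ring_nf⟩ e) (g t) t) ∧
      Differentiable ℝ g ∧
      HasDerivAt g (Sym2.lift ⟨fun j k =>
          (w k - w j) ^ 2 / Real.cosh (ρ k - ρ j) - (w k + w j) ^ 2 / Real.cosh (ρ k + ρ j),
          fun j k => by simp only [Real.cosh_sub]; ring_nf⟩ e) 0 := by
    induction e using Sym2.ind with
    | _ j k => exact edge_deriv ρ w j k
  choose g hg1 hg2 hg3 using key
  have hΦ (t : ℝ) : HasDerivAt (fun t : ℝ => ∑ j, Φ j * (ρ + t • w) j) (∑ j, Φ j * w j) t := by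
    refine HasDerivAt.fun_sum fun j _ => ?_
    simpa using (((hasDerivAt_id t).mul_const (w j)).const_add (ρ j)).const_mul (Φ j)
  have hS (t : ℝ) : HasDerivAt (fun t : ℝ => circlePatternFunctional G Φ (ρ + t • w))
      (∑ e ∈ G.edgeFinset, g e t + ∑ j, Φ j * w j) t :=
    (HasDerivAt.fun_sum fun e _ => hg1 e t).add (hΦ t)
  have hd : deriv (fun t : ℝ => circlePatternFunctional G Φ (ρ + t • w)) =
      fun t => ∑ e ∈ G.edgeFinset, g e t + ∑ j, Φ j * w j := funext fun t => (hS t).deriv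
  refine ⟨fun t => (hS t).differentiableAt, ?_, ?_⟩
  · rw [hd]
    exact (Differentiable.fun_sum fun e _ => hg2 e).add_const _
  · rw [hd]
    exact ((HasDerivAt.fun_sum fun e _ => hg3 e).add_const _).deriv
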